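/- Let d ≥ 3. There exists C < ∞ such that for any r ≥ 1, any ℓ ≥ 16·r², and any K ⊆ B(3r) (the sup-norm ball of radius 3r around the origin), one has Σ_{z ∈ Z^d : |z| ≥ 4r} P_z(T_K ≤ ℓ) ≤ C·ℓ·cap(K). -/

import Mathlib

open MeasureTheory ENNReal Filter

noncomputable section

abbrev Zd (d : ℕ) := Fin d → ℤ

def supNorm {d : ℕ} (x : Zd d) : ℕ := Finset.univ.sup fun i => (x i).natAbs

def IsNbr {d : ℕ} (x y : Zd d) : Prop := (∑ i, |x i - y i|) = 1

def stepVec {d : ℕ} (p : Fin d × Bool) : Zd d :=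
  fun j => if j = p.1 then (if p.2 then 1 else -1) else 0

def nbrs {d : ℕ} (y : Zd d) : Finset (Zd d) :=
  Finset.univ.image fun p : Fin d × Bool => y + stepVec p

/-- A family of measures which is a simple random walk on `ℤ^d` started at `x`. -/
structure SRW (d : ℕ) where
  P : Zd d → Measure (ℕ → Zd d)
  isProb : ∀ x, IsProbabilityMeasure (P x)
  start : ∀ x, P x {ω | ω 0 = x} = 1
  nn : ∀ x, P x {ω | ∀ t, IsNbr (ω t) (ω (t+1))} = 1
  cyl : ∀ (x : Zd d) (n : ℕ) (γ : ℕ → Zd d), γ 0 = x →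
      (∀ t < n, IsNbr (γ t) (γ (t+1))) →
      P x {ω | ∀ t ≤ n, ω t = γ t} = (((2 * d : ℕ) : ℝ≥0∞))⁻¹ ^ n

def HitBy {d : ℕ} (K : Set (Zd d)) (ℓ : ℕ) : Set (ℕ → Zd d) := {ω | ∃ t ≤ ℓ, ω t ∈ K}

def Hits {d : ℕ} (K : Set (Zd d)) : Set (ℕ → Zd d) := {ω | ∃ t, ω t ∈ K}

def nPaths (d : ℕ) : ℕ → Zd d → Zd d → ℕ
  | 0, x, y => if x = y then 1 else 0
  | t+1, x, y => ∑ z ∈ nbrs y, nPaths d t x z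

def pKer (d t : ℕ) (x y : Zd d) : ℝ≥0∞ := (nPaths d t x y : ℝ≥0∞) / ((2*d : ℕ) : ℝ≥0∞)^t

def green (d : ℕ) (x y : Zd d) : ℝ≥0∞ := ∑' t, pKer d t x y

def nAvoid {d : ℕ} (K : Finset (Zd d)) : ℕ → Zd d → ℕ
  | 0, _ => 1
  | t+1, x => ∑ z ∈ (nbrs x).filter (fun z => z ∉ K), nAvoid K t z

def escProb {d : ℕ} (K : Finset (Zd d)) (x : Zd d) : ℝ≥0∞ :=
  ⨅ n, (nAvoid K n x : ℝ≥0∞) / ((2*d : ℕ) : ℝ≥0∞)^n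

def cap {d : ℕ} (K : Finset (Zd d)) : ℝ≥0∞ := ∑ x ∈ K, escProb K x

def ConnIn {d : ℕ} (S : Set (Zd d)) (x y : Zd d) : Prop :=
  ∃ (n : ℕ) (γ : ℕ → Zd d), γ 0 = x ∧ γ n = y ∧ (∀ t < n, IsNbr (γ t) (γ (t+1))) ∧ ∀ t ≤ n, γ t ∈ S

def PercSet {d : ℕ} (S : Set (Zd d)) : Prop := ∃ x ∈ S, {y | ConnIn S x y}.Infinite

def IsAnimal {d : ℕ} (H : Finset (Zd d)) : Prop :=
  (0 : Zd d) ∈ H ∧ ∀ x ∈ H, ∀ y ∈ H, ConnIn (H : Set (Zd d)) x y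

abbrev Animal (d : ℕ) := {H : Finset (Zd d) // IsAnimal H}

def zooTrace {d : ℕ} {Ω : Type*} (N : Zd d × Animal d → Ω → ℕ) (ω : Ω) : Set (Zd d) :=
  {z | ∃ p : Zd d × Animal d, 1 ≤ N p ω ∧ z - p.1 ∈ p.2.1}

def poissonProb (lam : ℝ) (k : ℕ) : ℝ≥0∞ :=
  ENNReal.ofReal (Real.exp (-lam) * lam ^ k / (Nat.factorial k))

def cluster {d : ℕ} (S : Set (Zd d)) (x : Zd d) : Set (Zd d) := {y | x ∈ S ∧ ConnIn S x y}

def closF {d : ℕ} (H : Finset (Zd d)) : Finset (Zd d) := H ∪ H.biUnion nbrs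


abbrev Worm (d : ℕ) := Σ n : ℕ, (Zd d × (Fin n → Fin d × Bool))

def wormLen {d : ℕ} (w : Worm d) : ℕ := w.1 + 1

def IsBernoulliSite {d : ℕ} (P : Measure (Zd d → Bool)) (p : ℝ≥0∞) : Prop :=
  ∀ A B : Finset (Zd d), Disjoint A B →
    P {η | (∀ a ∈ A, η a = true) ∧ ∀ b ∈ B, η b = false} = p ^ A.card * (1 - p) ^ B.card

/-- The critical probability of Bernoulli site percolation on `ℤ^d`. -/
def pcSite (d : ℕ) : ℝ≥0∞ :=
  sInf {p | ∀ P : Measure (Zd d → Bool), IsProbabilityMeasure P → IsBernoulliSite P p →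
    P {η | PercSet {x | η x = true}} = 1}

open Classical in
/-- The Grimmett–Marstrand exploration process: given an ordering `emb` of the (directed)
nearest-neighbour edges and outcomes `b t`, produce the pair (good set, bad set) at step `t`. -/
def explore {d : ℕ} (emb : (Zd d × Zd d) ↪ ℕ) (b : ℕ → Bool) : ℕ → Finset (Zd d) × Finset (Zd d)
  | 0 => if b 0 then ({0}, ∅) else (∅, {0})
  | t+1 =>
    let G := (explore emb b t).1
    let B := (explore emb b t).2
    let cand : Finset (Zd d × Zd d) :=
      G.biUnion fun u => ((nbrs u).filter fun w => w ∉ G ∧ w ∉ B).image fun w => (u, w)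
    if h : cand.Nonempty then
      let e := (Finset.exists_min_image cand (fun p => emb p) h).choose
      if b (t+1) then (insert e.2 G, B) else (G, insert e.2 B)
    else (G, B)

/-- Mutual Dirichlet energy of two measures on `ℤ^d` w.r.t. the random-walk Green function. -/
def energy (d : ℕ) (μ₁ μ₂ : Zd d → ℝ≥0∞) : ℝ≥0∞ :=
  ∑' x, ∑' y, green d x y * μ₁ x * μ₂ y

/-! ### Elementary analysis -/

/-- The function `x ↦ x^(-1/4)`. -/
def Hq (x : ℝ) : ℝ := x ^ (-(1/4) : ℝ)

lemma Hq_pos {x : ℝ} (hx : 0 < x) : 0 < Hq x := Real.rpow_pos_of_pos hx _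

lemma Hq_pow {x : ℝ} (hx : 0 < x) : Hq x ^ 4 * x = 1 := by
  unfold Hq
  rw [← Real.rpow_natCast, ← Real.rpow_mul hx.le]
  norm_num
  rw [Real.rpow_neg_one]
  exact inv_mul_cancel₀ hx.ne'

lemma Hq_mul {x y : ℝ} (hx : 0 < x) (hy : 0 < y) : Hq (x * y) = Hq x * Hq y :=
  Real.mul_rpow hx.le hy.le

lemma Hq_le {x q : ℝ} (hx : 0 < x) (hq : 0 ≤ q) (h : 1 ≤ q ^ 4 * x) : Hq x ≤ q := by
  by_contra hlt
  push Not at hlt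
  have h1 : q ^ 4 < Hq x ^ 4 := pow_lt_pow_left₀ hlt hq (by norm_num)
  have h2 := Hq_pow hx
  nlinarith [mul_lt_mul_of_pos_right h1 hx]

lemma le_Hq {x q : ℝ} (hx : 0 < x) (h : q ^ 4 * x ≤ 1) : q ≤ Hq x := by
  by_contra hlt
  push Not at hlt
  have h1 : Hq x ^ 4 < q ^ 4 := pow_lt_pow_left₀ hlt (Hq_pos hx).le (by norm_num)
  have h2 := Hq_pow hx
  nlinarith [mul_lt_mul_of_pos_right h1 hx]

lemma quart_aux (t : ℝ) (h1 : -(1/16) ≤ t) (h2 : t ≤ 1/16) :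
    (1:ℝ) ≤ (1 - t/4 + 3*t^2/16)^4 * (1 + t) := by
  have hq : 1 - t/2 + (27/64) * t^2 ≤ (1 - t/4 + 3*t^2/16)^2 := by
    have : (1 - t/4 + 3*t^2/16)^2 - (1 - t/2 + (27/64) * t^2)
      = t^2 * (1/64 - 3/32 * t + 9/256 * t^2) := by ring
    have h3 : 0 ≤ t^2 * (1/64 - 3/32 * t + 9/256 * t^2) := by
      apply mul_nonneg (sq_nonneg t); nlinarith [sq_nonneg t]
    linarith
  have hp0 : 0 ≤ 1 - t/2 + (27/64) * t^2 := by nlinarith [sq_nonneg t]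
  have hp : 1 - t + (35/32) * t^2 - (27/64) * t^3 ≤ (1 - t/2 + (27/64) * t^2)^2 := by
    have : (1 - t/2 + (27/64) * t^2)^2 - (1 - t + (35/32) * t^2 - (27/64) * t^3)
      = ((27/64) * t^2)^2 := by ring
    nlinarith [sq_nonneg ((27/64) * t^2)]
  have hpq : 1 - t + (35/32) * t^2 - (27/64) * t^3 ≤ (1 - t/4 + 3*t^2/16)^4 := by
    calc _ ≤ _ := hp
      _ ≤ ((1 - t/4 + 3*t^2/16)^2)^2 := pow_le_pow_left₀ hp0 hq 2
      _ = _ := by ring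
  have h4 := mul_le_mul_of_nonneg_right hpq (by linarith : 0 ≤ 1 + t)
  have h5 : (1 - t + (35/32) * t^2 - (27/64) * t^3) * (1 + t) - 1
    = t^2 * (3/32 + 43/64 * t - 27/64 * t^2) := by ring
  have h6 : 0 ≤ t^2 * (3/32 + 43/64 * t - 27/64 * t^2) := by
    apply mul_nonneg (sq_nonneg t); nlinarith
  linarith

lemma Hq_one_sub (s : ℝ) (h0 : 0 ≤ s) (h1 : s < 1) : 1 + s/4 ≤ Hq (1 - s) := by
  apply le_Hq (by linarith)
  have h2 : (1 + s/4)^4 ≤ Real.exp s := by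
    calc (1 + s/4)^4 ≤ (Real.exp (s/4))^4 := by
          apply pow_le_pow_left₀ (by linarith)
          linarith [Real.add_one_le_exp (s/4)]
      _ = Real.exp s := by rw [← Real.exp_nat_mul]; congr 1; push_cast; ring
  have h3 : 1 - s ≤ Real.exp (-s) := by linarith [Real.add_one_le_exp (-s)]
  calc (1 + s/4)^4 * (1 - s) ≤ Real.exp s * Real.exp (-s) := by
        apply mul_le_mul h2 h3 (by linarith) (Real.exp_pos _).le
    _ = 1 := by rw [← Real.exp_add]; simp

/-! ### Neighbours -/

lemma stepVec_inj {d : ℕ} : Function.Injective (stepVec : Fin d × Bool → Zd d) := by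
  rintro ⟨i, a⟩ ⟨j, b⟩ h
  have h1 := congrFun h i
  have h2 : i = j := by
    by_contra hne
    simp [stepVec, hne] at h1
    cases a <;> simp at h1
  subst h2
  cases a <;> cases b <;> simp [stepVec] at h1 ⊢

lemma sum_nbrs {d : ℕ} {M : Type*} [AddCommMonoid M] (x : Zd d) (f : Zd d → M) :
    ∑ w ∈ nbrs x, f w = ∑ p : Fin d × Bool, f (x + stepVec p) := by
  unfold nbrs
  rw [Finset.sum_image]
  intro p _ q _ h
  exact stepVec_inj (add_left_cancel h)

lemma isNbr_step {d : ℕ} (x : Zd d) (p : Fin d × Bool) : IsNbr x (x + stepVec p) := by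
  obtain ⟨i, b⟩ := p
  unfold IsNbr
  rw [Finset.sum_eq_single i]
  · cases b <;> simp [stepVec]
  · intro j _ hj
    simp [stepVec, hj]
  · simp

lemma isNbr_iff {d : ℕ} (x y : Zd d) : IsNbr x y ↔ y ∈ nbrs x := by
  constructor
  · intro h
    unfold IsNbr at h
    have hex : ∃ i, x i - y i ≠ 0 := by
      by_contra hne
      push Not at hne
      simp [hne] at h
    obtain ⟨i, hi⟩ := hex
    have hsplit := Finset.add_sum_erase Finset.univ (fun i => |x i - y i|) (Finset.mem_univ i)
    rw [h] at hsplit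
    have hpos : 0 < |x i - y i| := abs_pos.mpr hi
    have hnn : 0 ≤ ∑ j ∈ Finset.univ.erase i, |x j - y j| :=
      Finset.sum_nonneg fun _ _ => abs_nonneg _
    have hz : ∑ j ∈ Finset.univ.erase i, |x j - y j| = 0 := by omega
    have h1 : |x i - y i| = 1 := by omega
    rw [Finset.sum_eq_zero_iff_of_nonneg (fun _ _ => abs_nonneg _)] at hz
    have hz' : ∀ j, j ≠ i → y j = x j := by
      intro j hj
      have := hz j (by simp [hj])
      have := abs_eq_zero.mp this
      omega
    unfold nbrs
    simp only [Finset.mem_image, Finset.mem_univ, true_and]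
    rcases (abs_eq (by norm_num : (0:ℤ) ≤ 1)).mp h1 with h2 | h2
    · refine ⟨(i, false), ?_⟩
      funext j
      by_cases hj : j = i
      · subst hj; simp [stepVec]; omega
      · simp [stepVec, hj, hz' j hj]
    · refine ⟨(i, true), ?_⟩
      funext j
      by_cases hj : j = i
      · subst hj; simp [stepVec]; omega
      · simp [stepVec, hj, hz' j hj]
  · intro h
    unfold nbrs at h
    simp only [Finset.mem_image, Finset.mem_univ, true_and] at h
    obtain ⟨p, rfl⟩ := h
    exact isNbr_step x p

lemma nbrs_symm {d : ℕ} (x y : Zd d) : y ∈ nbrs x ↔ x ∈ nbrs y := by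
  rw [← isNbr_iff, ← isNbr_iff]
  unfold IsNbr
  simp only [abs_sub_comm]

/-! ### The superharmonic function -/

def nsq {d : ℕ} (x : Zd d) : ℝ := ∑ i, (x i : ℝ)^2

lemma nsq_step {d : ℕ} (x : Zd d) (i : Fin d) (b : Bool) :
    nsq (x + stepVec (i, b)) = nsq x + 1 + 2 * (if b then (x i : ℝ) else -(x i : ℝ)) := by
  unfold nsq
  have h : ∀ j, (((x + stepVec (i, b)) j : ℤ) : ℝ)^2
      = (x j : ℝ)^2 + (if j = i then 1 + 2 * (if b then (x i : ℝ) else -(x i : ℝ)) else 0) := by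
    intro j
    by_cases hj : j = i
    · subst hj; cases b <;> simp [stepVec] <;> ring
    · simp [stepVec, hj]
  simp only [h, Finset.sum_add_distrib, Finset.sum_ite_eq', Finset.mem_univ, if_true]
  ring

lemma nsq_nonneg {d : ℕ} (x : Zd d) : 0 ≤ nsq x := Finset.sum_nonneg fun _ _ => sq_nonneg _

lemma sq_le_nsq {d : ℕ} (x : Zd d) (i : Fin d) : (x i : ℝ)^2 ≤ nsq x :=
  Finset.single_le_sum (f := fun i => (x i : ℝ)^2) (fun _ _ => sq_nonneg _) (Finset.mem_univ i)

def Gf {d : ℕ} (S : ℝ) (x : Zd d) : ℝ := Hq ((nsq x + 256) / S)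

lemma Hq_pair (S v y : ℝ) (hS : 0 < S) (hv : y^2 + 257 ≤ v) :
    Hq ((v + 2 * y) / S) + Hq ((v - 2 * y) / S) ≤ Hq (v / S) * (2 + (3/2) * (y^2 / v^2)) := by
  have hv0 : 0 < v := by nlinarith [sq_nonneg y]
  have hb1 : 2 * y / v ≤ 1/16 := by
    rw [div_le_iff₀ hv0]; nlinarith [sq_nonneg (y - 16)]
  have hb2 : -(1/16) ≤ 2 * y / v := by
    rw [le_div_iff₀ hv0]; nlinarith [sq_nonneg (y + 16)]
  set t := 2 * y / v with ht
  have e1 : (v + 2 * y) / S = (v / S) * (1 + t) := by rw [ht]; field_simp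
  have e2 : (v - 2 * y) / S = (v / S) * (1 + -t) := by rw [ht]; field_simp; ring
  have hvS : 0 < v / S := div_pos hv0 hS
  rw [e1, e2, Hq_mul hvS (by linarith), Hq_mul hvS (by linarith)]
  have a1 : Hq (1 + t) ≤ 1 - t/4 + 3*t^2/16 :=
    Hq_le (by linarith) (by nlinarith [sq_nonneg t]) (quart_aux t hb2 hb1)
  have a2 : Hq (1 + -t) ≤ 1 - (-t)/4 + 3*(-t)^2/16 :=
    Hq_le (by linarith) (by nlinarith [sq_nonneg t]) (quart_aux (-t) (by linarith) (by linarith))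
  have e3 : y^2 / v^2 = t^2 / 4 := by rw [ht]; field_simp; ring
  rw [e3, ← mul_add]
  apply mul_le_mul_of_nonneg_left _ (Hq_pos hvS).le
  nlinarith

lemma Gf_super {d : ℕ} (hd : 3 ≤ d) (S : ℝ) (hS : 0 < S) (x : Zd d) :
    ∑ p : Fin d × Bool, Gf S (x + stepVec p) ≤ 2 * d * Gf S x := by
  have hn := nsq_nonneg x
  set v : ℝ := nsq x + 257 with hv
  have hv0 : 0 < v := by linarith
  have hvS : 0 < v / S := div_pos hv0 hS
  have hd' : (3:ℝ) ≤ d := by exact_mod_cast hd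
  rw [Fintype.sum_prod_type]
  have h1 : ∀ i, ∑ b : Bool, Gf S (x + stepVec (i, b))
      ≤ Hq (v / S) * (2 + (3/2) * ((x i : ℝ)^2 / v^2)) := by
    intro i
    have := Hq_pair S v (x i) hS (by linarith [sq_le_nsq x i])
    simp only [Fintype.sum_bool, Gf, nsq_step]
    convert this using 3
    · simp [hv]; ring
    · simp [hv]; ring
  have hpos := Hq_pos hvS
  have e4 : ((nsq x + 256) / S) = (v / S) * (1 - 1 / v) := by rw [hv]; field_simp; ring
  have hv1 : 1 / v < 1 := by rw [div_lt_one hv0]; linarith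
  have hinv : 0 < 1 / v := by positivity
  calc _ ≤ ∑ i, Hq (v / S) * (2 + (3/2) * ((x i : ℝ)^2 / v^2)) := Finset.sum_le_sum fun i _ => h1 i
    _ = Hq (v / S) * (2 * d + (3/2) * (nsq x / v^2)) := by
        rw [← Finset.mul_sum, Finset.sum_add_distrib, ← Finset.mul_sum, ← Finset.sum_div]
        simp only [nsq, Finset.sum_const, Finset.card_univ, Fintype.card_fin, nsmul_eq_mul]; ring
    _ ≤ Hq (v / S) * (2 * d * (1 + (1 / v) / 4)) := by
        apply mul_le_mul_of_nonneg_left _ hpos.le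
        have : nsq x / v^2 ≤ 1 / v := by
          rw [div_le_div_iff₀ (by positivity) hv0]; nlinarith
        nlinarith
    _ ≤ Hq (v / S) * (2 * d * Hq (1 - 1 / v)) := by
        apply mul_le_mul_of_nonneg_left _ hpos.le
        apply mul_le_mul_of_nonneg_left _ (by positivity)
        exact Hq_one_sub _ hinv.le hv1
    _ = 2 * d * Gf S x := by
        unfold Gf
        rw [e4, Hq_mul hvS (by linarith)]; ring


lemma sum_step_zero {d : ℕ} (i : Fin d) :
    ∑ p : Fin d × Bool, ((stepVec p i : ℤ) : ℝ) = 0 := by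
  rw [Fintype.sum_prod_type]
  apply Finset.sum_eq_zero
  intro j _
  by_cases h : i = j <;> simp [stepVec, h]

lemma step_le_one {d : ℕ} (i : Fin d) (p : Fin d × Bool) (σ : ℤ) (hσ : σ = 1 ∨ σ = -1) :
    σ * stepVec p i ≤ 1 := by
  unfold stepVec
  rcases hσ with rfl | rfl <;> split_ifs <;> norm_num

/-- Uniform positive barrier. -/
lemma barrier {d : ℕ} (hd : 3 ≤ d) (r : ℕ) (hr : 1 ≤ r) (i : Fin d) (σ : ℤ)
    (hσ : σ = 1 ∨ σ = -1) :
    ∃ F : Zd d → ℝ, (∀ x, 0 ≤ F x) ∧ (∀ x, supNorm x ≤ 3 * r → 1 ≤ F x) ∧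
      (∀ x, ∑ p : Fin d × Bool, F (x + stepVec p) ≤ 2 * d * F x) ∧
      (∀ x, 4 * (r:ℤ) ≤ σ * x i → F x ≤ 1 - 1 / (128 * d)) := by
  have hd' : (3:ℝ) ≤ d := by exact_mod_cast hd
  have hr' : (1:ℝ) ≤ r := by exact_mod_cast hr
  set c : ℝ := 1 / (128 * d) with hc
  have hc0 : 0 < c := by positivity
  have hc1 : c * (64 * d) = 1 / 2 := by rw [hc]; field_simp; norm_num
  have hσ2 : (σ:ℝ)^2 = 1 := by rcases hσ with rfl | rfl <;> norm_num
  set S : ℝ := 9 * r^2 * d + 256 with hSdef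
  have hS : 0 < S := by positivity
  set lin : Zd d → ℝ := fun y => 1 - c / r * (σ * y i - 3 * r) with hlin
  have hcr : 0 < c / r := by positivity
  have hG0 : ∀ x : Zd d, 0 < Gf S x := fun x =>
    Hq_pos (div_pos (by linarith [nsq_nonneg x]) hS)
  -- far away, `G` is small
  have hGfar : ∀ x : Zd d, 64 * (d:ℤ) * r ≤ σ * x i → Gf S x ≤ 1 / 2 := by
    intro x hx
    apply Hq_le (div_pos (by linarith [nsq_nonneg x]) hS) (by norm_num)
    have h1 : 64 * (d:ℝ) * r ≤ σ * x i := by exact_mod_cast hx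
    have h2 : (64 * (d:ℝ) * r)^2 ≤ (σ * x i)^2 := pow_le_pow_left₀ (by positivity) h1 2
    have h3 : ((σ:ℝ) * x i)^2 = (x i : ℝ)^2 := by rw [mul_pow, hσ2, one_mul]
    have h4 := sq_le_nsq x i
    have h5 : (16:ℝ) ≤ (nsq x + 256) / S := by
      rw [le_div_iff₀ hS, hSdef]
      have h6 : (1:ℝ) ≤ (r:ℝ)^2 := by nlinarith
      have h7 : (d:ℝ) ≤ (d:ℝ)^2 := by nlinarith
      have h8 : (1:ℝ) ≤ (d:ℝ)^2 := by nlinarith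
      have h9 : (d:ℝ) * r^2 ≤ d^2 * r^2 := by gcongr
      have h10 : (1:ℝ) ≤ (d:ℝ)^2 * r^2 := by nlinarith
      nlinarith
    norm_num
    linarith
  have hlinlow : ∀ x : Zd d, σ * x i ≤ 64 * (d:ℤ) * r → 1 / 2 ≤ lin x := by
    intro x hx
    have h1 : (σ:ℝ) * x i ≤ 64 * (d:ℝ) * r := by exact_mod_cast hx
    have h2 : c / r * (σ * x i - 3 * r) ≤ c / r * (64 * d * r) :=
      mul_le_mul_of_nonneg_left (by linarith) hcr.le
    have h3 : c / r * (64 * d * r) = 1 / 2 := by rw [← hc1]; field_simp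
    simp only [hlin]; linarith
  set F : Zd d → ℝ := fun x =>
    if σ * x i < 64 * (d:ℤ) * r then min (Gf S x) (min 1 (lin x)) else Gf S x with hF
  have hFG : ∀ x, F x ≤ Gf S x := by
    intro x; simp only [hF]; split_ifs
    · exact min_le_left _ _
    · exact le_rfl
  have hFlow : ∀ x, σ * x i ≤ 64 * (d:ℤ) * r → F x ≤ min 1 (lin x) := by
    intro x hx; simp only [hF]; split_ifs with h
    · exact min_le_right _ _
    · have h1 := hGfar x (by linarith)
      have h2 := hlinlow x hx
      exact le_min (by linarith) (by linarith)
  have hcard : ∑ p : Fin d × Bool, (1:ℝ) = 2 * d := by simp; ring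
  refine ⟨F, ?_, ?_, ?_, ?_⟩
  · intro x
    simp only [hF]; split_ifs with h
    · exact le_min (hG0 x).le (le_min zero_le_one (by linarith [hlinlow x h.le]))
    · exact (hG0 x).le
  · intro x hx
    have hxi : ∀ j, (x j).natAbs ≤ 3 * r := fun j =>
      le_trans (Finset.le_sup (f := fun i => (x i).natAbs) (Finset.mem_univ j)) hx
    have hG : 1 ≤ Gf S x := by
      apply le_Hq (div_pos (by linarith [nsq_nonneg x]) hS)
      rw [one_pow, one_mul, div_le_one hS, hSdef]
      have : nsq x ≤ ∑ j : Fin d, (3 * (r:ℝ))^2 := by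
        apply Finset.sum_le_sum
        intro j _
        rw [← sq_abs]
        apply pow_le_pow_left₀ (abs_nonneg _)
        have := hxi j
        have h2 : |x j| ≤ 3 * (r:ℤ) := by rw [Int.abs_eq_natAbs]; exact_mod_cast this
        exact_mod_cast h2
      simp only [Finset.sum_const, Finset.card_univ, Fintype.card_fin, nsmul_eq_mul] at this
      nlinarith
    have h3 : σ * x i ≤ 3 * r := by
      have := hxi i
      rcases hσ with rfl | rfl <;> omega
    simp only [hF]; split_ifs with h
    · refine le_min hG (le_min le_rfl ?_)
      have h4 : (σ:ℝ) * x i ≤ 3 * r := by exact_mod_cast h3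
      simp only [hlin]
      nlinarith
    · exact hG
  · intro x
    have hsG : ∑ p : Fin d × Bool, F (x + stepVec p) ≤ 2 * d * Gf S x :=
      le_trans (Finset.sum_le_sum fun p _ => hFG _) (Gf_super hd S hS x)
    by_cases h : σ * x i < 64 * (d:ℤ) * r
    · have hn : ∀ p, F (x + stepVec p) ≤ min 1 (lin (x + stepVec p)) := by
        intro p
        apply hFlow
        have := step_le_one i p σ hσ
        simp only [Pi.add_apply, mul_add]
        linarith
      have hs1 : ∑ p : Fin d × Bool, F (x + stepVec p) ≤ 2 * d * 1 := by
        rw [mul_one, ← hcard]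
        exact Finset.sum_le_sum fun p _ => (hn p).trans (min_le_left _ _)
      have hsl : ∑ p : Fin d × Bool, F (x + stepVec p) ≤ 2 * d * lin x := by
        calc _ ≤ ∑ p : Fin d × Bool, lin (x + stepVec p) :=
              Finset.sum_le_sum fun p _ => (hn p).trans (min_le_right _ _)
          _ = ∑ p : Fin d × Bool, (1 * lin x - c / r * σ * ((stepVec p i : ℤ) : ℝ)) := by
              apply Finset.sum_congr rfl
              intro p _
              simp only [hlin, Pi.add_apply]; push_cast; ring
          _ = _ := by
              rw [Finset.sum_sub_distrib, ← Finset.sum_mul, ← Finset.mul_sum, sum_step_zero, hcard]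
              ring
      have hF' : F x = min (Gf S x) (min 1 (lin x)) := by simp only [hF, if_pos h]
      rw [hF']
      rcases min_choice (Gf S x) (min 1 (lin x)) with e | e
      · rw [e]; exact hsG
      · rw [e]
        rcases min_choice 1 (lin x) with e | e
        · rw [e]; exact hs1
        · rw [e]; exact hsl
    · have hF' : F x = Gf S x := by simp only [hF, if_neg h]
      rw [hF']; exact hsG
  · intro x hx
    have hch : c ≤ 1 / 2 := by nlinarith
    by_cases h : σ * x i < 64 * (d:ℤ) * r
    · refine ((hFlow x h.le).trans (min_le_right _ _)).trans ?_
      have h4 : 4 * (r:ℝ) ≤ σ * x i := by exact_mod_cast hx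
      have h5 : c / r * r ≤ c / r * (σ * x i - 3 * r) :=
        mul_le_mul_of_nonneg_left (by linarith) hcr.le
      have h6 : c / r * r = c := by field_simp
      simp only [hlin]; linarith
    · have := hGfar x (by linarith)
      linarith [hFG x]

/-! ### Operators -/

/-- `A φ x = E_x[φ(X_1); X_1 ∉ K]`. -/
def opA {d : ℕ} (K : Finset (Zd d)) (φ : Zd d → ℝ≥0∞) (x : Zd d) : ℝ≥0∞ :=
  (((2 * d : ℕ) : ℝ≥0∞))⁻¹ * ∑ w ∈ nbrs x, if w ∈ K then 0 else φ w

/-- `B ψ y = 1_{y ∉ K} E_y[ψ(X_1)]`. -/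
def opB {d : ℕ} (K : Finset (Zd d)) (ψ : Zd d → ℝ≥0∞) (y : Zd d) : ℝ≥0∞ :=
  (((2 * d : ℕ) : ℝ≥0∞))⁻¹ * if y ∈ K then 0 else ∑ w ∈ nbrs y, ψ w

lemma opA_mono {d : ℕ} (K : Finset (Zd d)) {φ ψ : Zd d → ℝ≥0∞} (h : ∀ x, φ x ≤ ψ x) (x : Zd d) :
    opA K φ x ≤ opA K ψ x := by
  unfold opA
  gcongr with w _
  split_ifs
  · exact le_rfl
  · exact h w

lemma opA_iter_mono {d : ℕ} (K : Finset (Zd d)) {φ ψ : Zd d → ℝ≥0∞} (h : ∀ x, φ x ≤ ψ x)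
    (n : ℕ) : ∀ x, (opA K)^[n] φ x ≤ (opA K)^[n] ψ x := by
  induction n with
  | zero => exact h
  | succ n ih =>
    intro x
    rw [Function.iterate_succ_apply', Function.iterate_succ_apply']
    exact opA_mono K ih x

lemma opA_smul {d : ℕ} (K : Finset (Zd d)) (c : ℝ≥0∞) (φ : Zd d → ℝ≥0∞) :
    opA K (fun x => c * φ x) = fun x => c * opA K φ x := by
  funext x
  unfold opA
  rw [mul_left_comm, Finset.mul_sum (a := c)]
  congr 1
  apply Finset.sum_congr rfl
  intro w _
  split_ifs <;> simp

lemma opA_iter_smul {d : ℕ} (K : Finset (Zd d)) (c : ℝ≥0∞) (φ : Zd d → ℝ≥0∞) (n : ℕ) :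
    (opA K)^[n] (fun x => c * φ x) = fun x => c * (opA K)^[n] φ x := by
  induction n with
  | zero => rfl
  | succ n ih =>
    rw [Function.iterate_succ_apply', ih, opA_smul]
    simp only [Function.iterate_succ_apply']

lemma nAvoid_eq {d : ℕ} (K : Finset (Zd d)) (n : ℕ) : ∀ x,
    (nAvoid K n x : ℝ≥0∞) / ((2*d : ℕ) : ℝ≥0∞)^n = (opA K)^[n] (fun _ => 1) x := by
  induction n with
  | zero => intro x; simp [nAvoid]
  | succ n ih =>
    intro x
    rw [Function.iterate_succ_apply']
    rw [← funext ih]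
    unfold opA
    simp only [nAvoid, Nat.cast_sum, Finset.sum_filter]
    rw [div_eq_mul_inv, ENNReal.inv_pow, pow_succ, ← mul_assoc, mul_comm, Finset.sum_mul]
    congr 1
    apply Finset.sum_congr rfl
    intro w _
    by_cases hw : w ∈ K
    · simp [hw]
    · simp [hw, div_eq_mul_inv, ENNReal.inv_pow]

lemma card_nbrs_le {d : ℕ} (x : Zd d) : (nbrs x).card ≤ 2 * d := by
  refine Finset.card_image_le.trans ?_
  simp [mul_comm]

lemma opA_one_le {d : ℕ} (K : Finset (Zd d)) (x : Zd d) : opA K (fun _ => 1) x ≤ 1 := by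
  unfold opA
  calc _ ≤ (((2 * d : ℕ) : ℝ≥0∞))⁻¹ * ∑ w ∈ nbrs x, (1:ℝ≥0∞) := by
        gcongr with w _
        split_ifs <;> simp
    _ ≤ (((2 * d : ℕ) : ℝ≥0∞))⁻¹ * ((2 * d : ℕ) : ℝ≥0∞) := by
        gcongr
        simp only [Finset.sum_const, nsmul_eq_mul, mul_one]
        exact_mod_cast card_nbrs_le x
    _ ≤ 1 := ENNReal.inv_mul_le_one _

lemma opA_iter_antitone {d : ℕ} (K : Finset (Zd d)) (x : Zd d) :
    Antitone fun n => (opA K)^[n] (fun _ => 1) x := by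
  apply antitone_nat_of_succ_le
  intro n
  simp only [Function.iterate_succ_apply]
  exact opA_iter_mono K (opA_one_le K) n x

/-- Duality. -/
lemma duality {d : ℕ} (K : Finset (Zd d)) (φ ψ : Zd d → ℝ≥0∞) :
    ∑' z, φ z * opB K ψ z = ∑' x, opA K φ x * ψ x := by
  have hl : ∀ z, φ z * opB K ψ z = ∑' x, (((2 * d : ℕ) : ℝ≥0∞))⁻¹ *
      (if x ∈ nbrs z ∧ z ∉ K then φ z * ψ x else 0) := by
    intro z
    unfold opB
    rw [ENNReal.tsum_mul_left, mul_left_comm]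
    congr 1
    by_cases hz : z ∈ K
    · simp [hz]
    · simp only [hz, if_false, not_false_eq_true, and_true]
      rw [tsum_eq_sum (s := nbrs z), Finset.mul_sum]
      · apply Finset.sum_congr rfl
        intro w hw; simp [hw]
      · intro w hw; simp [hw]
  have hr : ∀ x, opA K φ x * ψ x = ∑' z, (((2 * d : ℕ) : ℝ≥0∞))⁻¹ *
      (if x ∈ nbrs z ∧ z ∉ K then φ z * ψ x else 0) := by
    intro x
    unfold opA
    rw [ENNReal.tsum_mul_left, mul_assoc]
    congr 1
    rw [tsum_eq_sum (s := nbrs x), Finset.sum_mul]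
    · apply Finset.sum_congr rfl
      intro w hw
      have := (nbrs_symm x w).mp hw
      by_cases hwK : w ∈ K <;> simp [this, hwK]
    · intro w hw
      have : x ∉ nbrs w := fun h => hw ((nbrs_symm w x).mp h)
      simp [this]
  simp only [hl, hr]
  exact ENNReal.tsum_comm

lemma duality_iter {d : ℕ} (K : Finset (Zd d)) (ψ : Zd d → ℝ≥0∞) (n : ℕ) :
    ∀ φ : Zd d → ℝ≥0∞, ∑' z, φ z * (opB K)^[n] ψ z = ∑' x, (opA K)^[n] φ x * ψ x := by
  induction n with
  | zero => intro φ; rfl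
  | succ n ih =>
    intro φ
    simp only [Function.iterate_succ_apply' (opB K), Function.iterate_succ_apply (opA K)]
    rw [duality, ih]

/-! ### Uniform escape bound -/

lemma escape_aux {d : ℕ} (hd : 3 ≤ d) (K : Finset (Zd d)) (F : Zd d → ℝ) (hF0 : ∀ x, 0 ≤ F x)
    (hFK : ∀ x ∈ K, 1 ≤ F x)
    (hs : ∀ x, ∑ p : Fin d × Bool, F (x + stepVec p) ≤ 2 * d * F x) (m : ℕ) :
    ∀ x, ENNReal.ofReal (1 - F x) ≤ (opA K)^[m] (fun _ => 1) x := by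
  induction m with
  | zero =>
    intro x
    simp only [Function.iterate_zero, id]
    exact ENNReal.ofReal_le_one.mpr (by linarith [hF0 x])
  | succ m ih =>
    intro x
    rw [Function.iterate_succ_apply']
    refine le_trans ?_ (opA_mono K ih x)
    unfold opA
    have h1 : ∀ w, (if w ∈ K then 0 else ENNReal.ofReal (1 - F w)) = ENNReal.ofReal (1 - F w) := by
      intro w
      split_ifs with hw
      · rw [ENNReal.ofReal_of_nonpos]; linarith [hFK w hw]
      · rfl
    simp only [h1]
    have hdpos : (0:ℝ) < 2 * d := by
      have : (3:ℝ) ≤ d := by exact_mod_cast hd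
      linarith
    rw [sum_nbrs]
    have h2 : ENNReal.ofReal (2 * d) = ((2 * d : ℕ) : ℝ≥0∞) := by
      rw [← ENNReal.ofReal_natCast]; push_cast; rfl
    rw [← h2, ← ENNReal.ofReal_inv_of_pos hdpos]
    have h3 : 1 - F x ≤ (2 * (d:ℝ))⁻¹ * ∑ p : Fin d × Bool, (1 - F (x + stepVec p)) := by
      rw [inv_mul_eq_div, le_div_iff₀ hdpos, Finset.sum_sub_distrib]
      have hcard : ∑ p : Fin d × Bool, (1:ℝ) = 2 * d := by simp; ring
      rw [hcard]
      linarith [hs x]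
    refine (ENNReal.ofReal_le_ofReal h3).trans ?_
    rw [ENNReal.ofReal_mul (inv_nonneg.mpr hdpos.le)]
    gcongr
    generalize (Finset.univ : Finset (Fin d × Bool)) = s
    induction s using Finset.induction_on with
    | empty => simp
    | insert a s ha ihs =>
      rw [Finset.sum_insert ha, Finset.sum_insert ha]
      exact ENNReal.ofReal_add_le.trans (by gcongr)

lemma escape_bound {d : ℕ} (hd : 3 ≤ d) (r : ℕ) (hr : 1 ≤ r) (K : Finset (Zd d))
    (hK : ∀ x ∈ K, supNorm x ≤ 3 * r) (z : Zd d) (hz : 4 * r ≤ supNorm z) (m : ℕ) :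
    ENNReal.ofReal (1 / (128 * d)) ≤ (opA K)^[m] (fun _ => 1) z := by
  have hne : (Finset.univ : Finset (Fin d)).Nonempty := ⟨⟨0, by omega⟩, Finset.mem_univ _⟩
  obtain ⟨i, _, hi⟩ := Finset.exists_mem_eq_sup Finset.univ hne (fun i => (z i).natAbs)
  have hzi : 4 * r ≤ (z i).natAbs := by
    have : supNorm z = (z i).natAbs := hi
    omega
  obtain ⟨σ, hσ, hσz⟩ : ∃ σ : ℤ, (σ = 1 ∨ σ = -1) ∧ 4 * (r:ℤ) ≤ σ * z i := by
    rcases le_total 0 (z i) with h | h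
    · exact ⟨1, Or.inl rfl, by omega⟩
    · exact ⟨-1, Or.inr rfl, by omega⟩
  obtain ⟨F, h0, h1, h2, h3⟩ := barrier hd r hr i σ hσ
  refine le_trans (ENNReal.ofReal_le_ofReal ?_) (escape_aux hd K F h0 (fun x hx => h1 x (hK x hx)) h2 m z)
  linarith [h3 z hσz]

lemma iter_le_esc {d : ℕ} (K : Finset (Zd d)) (c : ℝ≥0∞) (φ : Zd d → ℝ≥0∞)
    (h : ∀ m x, c * φ x ≤ (opA K)^[m] (fun _ => 1) x) (t : ℕ) (x : Zd d) :
    c * (opA K)^[t] φ x ≤ escProb K x := by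
  unfold escProb
  apply le_iInf
  intro n
  rw [nAvoid_eq]
  refine le_trans ?_ (opA_iter_antitone K x (Nat.le_add_left n t))
  simp only [Function.iterate_add_apply]
  have := opA_iter_mono K (h n) t x
  rwa [opA_iter_smul] at this

/-! ### Path measure -/

def indK {d : ℕ} (K : Finset (Zd d)) (x : Zd d) : ℝ≥0∞ := if x ∈ K then 1 else 0

lemma nn_null {d : ℕ} (W : SRW d) (z : Zd d) : W.P z {ω | ∀ t, IsNbr (ω t) (ω (t+1))}ᶜ = 0 := by
  haveI := W.isProb z
  rw [prob_compl_eq_zero_iff]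
  · exact W.nn z
  · rw [Set.setOf_forall]
    apply MeasurableSet.iInter
    intro t
    have : Measurable fun ω : ℕ → Zd d => (ω t, ω (t+1)) := by fun_prop
    exact this (measurableSet_setOf.mpr (measurable_of_countable fun p : Zd d × Zd d => IsNbr p.1 p.2))

lemma path_bound {d : ℕ} (W : SRW d) (K : Finset (Zd d)) (z : Zd d) (m : ℕ) :
    ∀ (n : ℕ) (γ : ℕ → Zd d), γ 0 = z → (∀ t < n, IsNbr (γ t) (γ (t+1))) →
      W.P z {ω | (∀ t ≤ n, ω t = γ t) ∧ (∀ s < m, ω (n + s) ∉ K) ∧ ω (n + m) ∈ K}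
        ≤ (((2 * d : ℕ) : ℝ≥0∞))⁻¹ ^ n * (opB K)^[m] (indK K) (γ n) := by
  induction m with
  | zero =>
    intro n γ h0 hn
    simp only [Function.iterate_zero, id, indK]
    by_cases hK : γ n ∈ K
    · simp only [hK, if_true, mul_one]
      rw [← W.cyl z n γ h0 hn]
      exact measure_mono fun ω h => h.1
    · have : {ω : ℕ → Zd d | (∀ t ≤ n, ω t = γ t) ∧ (∀ s < 0, ω (n + s) ∉ K) ∧ ω (n + 0) ∈ K} = ∅ := by
        ext ω
        simp only [Set.mem_setOf_eq, Set.mem_empty_iff_false, iff_false]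
        rintro ⟨h1, _, h2⟩
        rw [add_zero, h1 n le_rfl] at h2
        exact hK h2
      rw [this]; simp
  | succ m ih =>
    intro n γ h0 hn
    rw [Function.iterate_succ_apply']
    by_cases hK : γ n ∈ K
    · have : {ω : ℕ → Zd d | (∀ t ≤ n, ω t = γ t) ∧ (∀ s < m + 1, ω (n + s) ∉ K) ∧
          ω (n + (m + 1)) ∈ K} = ∅ := by
        ext ω
        simp only [Set.mem_setOf_eq, Set.mem_empty_iff_false, iff_false]
        rintro ⟨h1, h2, _⟩
        have := h2 0 (by omega)
        rw [add_zero, h1 n le_rfl] at this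
        exact this hK
      rw [this]; simp
    · unfold opB
      rw [if_neg hK]
      set γ' : Zd d → ℕ → Zd d := fun w => Function.update γ (n+1) w with hγ'
      have hγ1 : ∀ w t, t ≤ n → γ' w t = γ t := by
        intro w t ht
        simp only [hγ']
        rw [Function.update_of_ne (by omega)]
      have hγ2 : ∀ w, γ' w (n+1) = w := by intro w; simp [hγ']
      have hsub : {ω : ℕ → Zd d | (∀ t ≤ n, ω t = γ t) ∧ (∀ s < m + 1, ω (n + s) ∉ K) ∧
          ω (n + (m + 1)) ∈ K} ⊆ {ω | ∀ t, IsNbr (ω t) (ω (t+1))}ᶜ ∪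
          ⋃ w ∈ nbrs (γ n), {ω | (∀ t ≤ n + 1, ω t = γ' w t) ∧ (∀ s < m, ω (n + 1 + s) ∉ K) ∧
            ω (n + 1 + m) ∈ K} := by
        rintro ω ⟨h1, h2, h3⟩
        by_cases hω : ∀ t, IsNbr (ω t) (ω (t+1))
        · right
          simp only [Set.mem_iUnion]
          refine ⟨ω (n+1), ?_, ?_, ?_, ?_⟩
          · rw [← isNbr_iff, ← h1 n le_rfl]; exact hω n
          · intro t ht
            rcases Nat.lt_or_ge n t with h | h
            · have : t = n + 1 := by omega
              subst this; rw [hγ2]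
            · rw [hγ1 _ t h, h1 t h]
          · intro s hs
            have := h2 (s+1) (by omega)
            rwa [show n + 1 + s = n + (s + 1) by ring]
          · rwa [show n + 1 + m = n + (m + 1) by ring]
        · left; exact hω
      refine (measure_mono hsub).trans ((measure_union_le _ _).trans ?_)
      rw [nn_null, zero_add]
      refine (measure_biUnion_finset_le _ _).trans ?_
      rw [← mul_assoc, ← pow_succ, Finset.mul_sum]
      apply Finset.sum_le_sum
      intro w hw
      have := ih (n+1) (γ' w) (by rw [hγ1 w 0 (by omega), h0]) (by
        intro t ht
        rcases Nat.lt_or_ge t n with h | h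
        · rw [hγ1 w t (by omega), hγ1 w (t+1) (by omega)]; exact hn t h
        · have : t = n := by omega
          subst this
          rw [hγ1 w t le_rfl, hγ2, isNbr_iff]; exact hw)
      rwa [hγ2] at this

lemma hit_bound {d : ℕ} (W : SRW d) (K : Finset (Zd d)) (z : Zd d) (ℓ : ℕ) :
    W.P z (HitBy (K : Set (Zd d)) ℓ) ≤ ∑ m ∈ Finset.range (ℓ + 1), (opB K)^[m] (indK K) z := by
  haveI := W.isProb z
  have hstart : W.P z {ω | ω 0 = z}ᶜ = 0 := by
    rw [prob_compl_eq_zero_iff]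
    · exact W.start z
    · exact measurable_pi_apply (X := fun _ : ℕ => Zd d) 0 (measurableSet_singleton z)
  have hsub : HitBy (K : Set (Zd d)) ℓ ⊆ {ω | ω 0 = z}ᶜ ∪ ⋃ m ∈ Finset.range (ℓ + 1),
      {ω | (∀ t ≤ 0, ω t = (fun _ : ℕ => z) t) ∧ (∀ s < m, ω (0 + s) ∉ K) ∧ ω (0 + m) ∈ K} := by
    classical
    rintro ω ⟨t, ht, hK⟩
    by_cases h0 : ω 0 = z
    · right
      have hex : ∃ t, ω t ∈ K := ⟨t, hK⟩
      simp only [Set.mem_iUnion]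
      refine ⟨Nat.find hex, ?_, ?_, ?_, ?_⟩
      · rw [Finset.mem_range]
        have := Nat.find_min' hex hK
        omega
      · intro t ht
        have : t = 0 := by omega
        subst this; exact h0
      · intro s hs
        rw [zero_add]; exact Nat.find_min hex hs
      · rw [zero_add]; exact Nat.find_spec hex
    · left; exact h0
  refine (measure_mono hsub).trans ((measure_union_le _ _).trans ?_)
  rw [hstart, zero_add]
  refine (measure_biUnion_finset_le _ _).trans ?_
  apply Finset.sum_le_sum
  intro m _
  have := path_bound W K z m 0 (fun _ => z) rfl (by intro t ht; omega)
  simpa using this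

theorem sum_hitting_upper_bound {d : ℕ} (hd : 3 ≤ d) :
    ∃ C : ℝ≥0∞, C ≠ ⊤ ∧ ∀ (W : SRW d) (r ℓ : ℕ) (K : Finset (Zd d)),
      1 ≤ r → 16 * r ^ 2 ≤ ℓ → (∀ x ∈ K, supNorm x ≤ 3 * r) →
      ∑' z : {z : Zd d // 4 * r ≤ supNorm z}, W.P z.1 (HitBy (K : Set (Zd d)) ℓ)
        ≤ C * ℓ * cap K := by
  have hd' : (3:ℝ) ≤ d := by exact_mod_cast hd
  set c : ℝ≥0∞ := ENNReal.ofReal (1 / (128 * d)) with hc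
  have hc0 : c ≠ 0 := by
    rw [hc, ne_eq, ENNReal.ofReal_eq_zero, not_le]; positivity
  have hct : c ≠ ⊤ := ENNReal.ofReal_ne_top
  refine ⟨2 * c⁻¹, ENNReal.mul_ne_top (by norm_num) (ENNReal.inv_ne_top.mpr hc0), ?_⟩
  intro W r ℓ K hr hℓ hK
  classical
  set φ : Zd d → ℝ≥0∞ := fun z => if 4 * r ≤ supNorm z then 1 else 0 with hφ
  have hesc : ∀ m x, c * φ x ≤ (opA K)^[m] (fun _ => 1) x := by
    intro m x
    simp only [hφ]
    split_ifs with h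
    · rw [mul_one]; exact escape_bound hd r hr K hK x h m
    · simp
  have hA : ∀ t x, (opA K)^[t] φ x ≤ c⁻¹ * escProb K x := by
    intro t x
    have := iter_le_esc K c φ hesc t x
    rw [mul_comm, ← div_eq_mul_inv, ENNReal.le_div_iff_mul_le (Or.inl hc0) (Or.inl hct), mul_comm]
    exact this
  have hsum : ∀ m, ∑' x, (opA K)^[m] φ x * indK K x ≤ c⁻¹ * cap K := by
    intro m
    rw [tsum_eq_sum (s := K)]
    · unfold cap
      rw [Finset.mul_sum]
      apply Finset.sum_le_sum
      intro x hx
      simp only [indK, hx, if_true, mul_one]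
      exact hA m x
    · intro x hx; simp [indK, hx]
  have hℓ1 : 1 ≤ ℓ := by nlinarith
  calc ∑' z : {z : Zd d // 4 * r ≤ supNorm z}, W.P z.1 (HitBy (K : Set (Zd d)) ℓ)
      = ∑' z, φ z * W.P z (HitBy (K : Set (Zd d)) ℓ) := by
        have := tsum_subtype {z : Zd d | 4 * r ≤ supNorm z}
          (fun z => W.P z (HitBy (K : Set (Zd d)) ℓ))
        refine this.trans ?_
        apply tsum_congr
        intro z
        by_cases h : 4 * r ≤ supNorm z <;> simp [hφ, Set.indicator, h]
    _ ≤ ∑' z, ∑ m ∈ Finset.range (ℓ + 1), φ z * (opB K)^[m] (indK K) z := by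
        apply ENNReal.tsum_le_tsum
        intro z
        rw [← Finset.mul_sum]
        gcongr
        exact hit_bound W K z ℓ
    _ = ∑ m ∈ Finset.range (ℓ + 1), ∑' x, (opA K)^[m] φ x * indK K x := by
        rw [Summable.tsum_finsetSum (fun _ _ => ENNReal.summable)]
        exact Finset.sum_congr rfl fun m _ => duality_iter K (indK K) m φ
    _ ≤ ∑ m ∈ Finset.range (ℓ + 1), c⁻¹ * cap K := Finset.sum_le_sum fun m _ => hsum m
    _ = ((ℓ + 1 : ℕ) : ℝ≥0∞) * (c⁻¹ * cap K) := by simp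
    _ ≤ ((2 * ℓ : ℕ) : ℝ≥0∞) * (c⁻¹ * cap K) := by
        gcongr
        omega
    _ = 2 * c⁻¹ * ℓ * cap K := by push_cast; ring

end
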